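/- arXiv:2209.07927 — 2 statements merged into one kernel-verified Lean document; each statement's English description precedes it below -/
import Mathlib

section
/- Let q be a prime power, let σ be a partition, let τ̃ be a partition such that every part of τ̃ is greater than 1 if q = 2, and let ε > 0. Then for all sufficiently large n the following holds: setting τ = (n − |σ| − |τ̃|, τ̃_1, τ̃_2, …), there exists a nonempty (σ,τ)-transitive subset Y of GL(n,q) satisfying |Y|/|GL(n,q)| < ε. -/
open Module

/-- The linear automorphism of `F_q^n` induced by `g ∈ GL(n,q)`. -/
def glMap (F : Type) [Field F] {n : ℕ} (g : GL (Fin n) F) : (Fin n → F) →ₗ[F] (Fin n → F) :=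
  Matrix.mulVecLin (g : Matrix (Fin n) (Fin n) F)

/-- An element `α = (ρ, I)` of `Σ_{n,q}`: a composition `ρ` of `n` together with a set `I` of
indices of parts of `ρ`, where for `q = 2` every part not indexed by `I` must exceed `1`. -/
structure SigmaNQ (q n : ℕ) where
  ρ : Composition n
  I : Finset (Fin ρ.length)
  two : q = 2 → ∀ i ∉ I, 1 < ρ.blocksFun i

/-- The first component `σ` of the type of `α = (ρ,I)`: the multiset of parts `ρ_i` with
`i ∈ I` (a partition, recorded as an unordered multiset of parts). -/
def SigmaNQ.typeSigma {q n : ℕ} (α : SigmaNQ q n) : Multiset ℕ :=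
  α.I.val.map α.ρ.blocksFun

/-- The second component `τ` of the type of `α = (ρ,I)`: the multiset of parts `ρ_i` with
`i ∉ I` (a partition, recorded as an unordered multiset of parts). -/
def SigmaNQ.typeTau {q n : ℕ} (α : SigmaNQ q n) : Multiset ℕ :=
  α.Iᶜ.val.map α.ρ.blocksFun

/-- An `α`-flag for `α = (ρ,I) ∈ Σ_{n,q}`: a `ρ`-flag `{0} = V_0 ≤ V_1 ≤ ⋯ ≤ V_k = F_q^n`
with `dim(V_i/V_{i−1}) = ρ_i`, together with, for each `i ∈ I`, an ordered basis of the
quotient `V_i/V_{i−1}`, recorded by a tuple of `ρ_i` representatives in `V_i` whose classes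
modulo `V_{i−1}` are linearly independent (hence a basis of `V_i/V_{i−1}`). -/
structure AlphaFlag (F : Type) [Field F] {q n : ℕ} (α : SigmaNQ q n) where
  V : Fin (α.ρ.length + 1) → Submodule F (Fin n → F)
  mono : Monotone V
  bot_eq : V 0 = ⊥
  top_eq : V (Fin.last α.ρ.length) = ⊤
  dim : ∀ i : Fin α.ρ.length,
    finrank F (V i.succ) = finrank F (V i.castSucc) + α.ρ.blocksFun i
  B : ∀ i : Fin α.ρ.length, i ∈ α.I → Fin (α.ρ.blocksFun i) → (Fin n → F)
  B_mem : ∀ i hi m, B i hi m ∈ V i.succ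
  B_indep : ∀ i hi,
    LinearIndependent F (fun m => (V i.castSucc).mkQ (B i hi m))

/-- `g ∈ GL(n,q)` maps the `α`-flag `A` to the `α`-flag `C`: it maps the subspaces of `A`
to those of `C`, and the basis representatives of `A` to representatives of the same classes
as those of `C` (i.e. `g` maps the induced bases of the quotients to each other). -/
def MapsAlphaFlag (F : Type) [Field F] {q n : ℕ} {α : SigmaNQ q n} (g : GL (Fin n) F)
    (A C : AlphaFlag F α) : Prop :=
  (∀ j, Submodule.map (glMap F g) (A.V j) = C.V j) ∧
  (∀ i hi m, glMap F g (A.B i hi m) - C.B i hi m ∈ C.V i.castSucc)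

/-- A subset `Y` of `GL(n,q)` is transitive on `α`-flags: there is a constant `r` such that
for all `α`-flags `A`, `C` there are exactly `r` elements `g ∈ Y` mapping `A` to `C`. -/
def TransitiveOnAlphaFlags (F : Type) [Field F] [Fintype F] {q n : ℕ} (Y : Set (GL (Fin n) F))
    (α : SigmaNQ q n) : Prop :=
  ∃ r : ℕ, ∀ A C : AlphaFlag F α,
    Nat.card {g : GL (Fin n) F // g ∈ Y ∧ MapsAlphaFlag F g A C} = r

/-- `(σ,τ) ∈ Θ_{n,q}`: `σ` and `τ` are partitions (multisets of positive parts) with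
`|σ| + |τ| = n` such that, if `q = 2`, every part of `τ` is greater than `1`. -/
def InTheta (q n : ℕ) (σ τ : Multiset ℕ) : Prop :=
  (∀ p ∈ σ, 0 < p) ∧ (∀ p ∈ τ, 0 < p) ∧ σ.sum + τ.sum = n ∧ (q = 2 → ∀ p ∈ τ, 1 < p)

/-- `Y ⊆ GL(n,q)` is `(σ,τ)`-transitive if it is transitive on `α`-flags for some
`α ∈ Σ_{n,q}` of type `(σ,τ)`. -/
def STTransitive (F : Type) [Field F] [Fintype F] (q n : ℕ) (Y : Set (GL (Fin n) F))
    (σ τ : Multiset ℕ) : Prop :=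
  ∃ α : SigmaNQ q n, α.typeSigma = σ ∧ α.typeTau = τ ∧ TransitiveOnAlphaFlags F Y α

/-! Call a colouring of `GL(V)` by a finite abelian group `Γ` of strength `s` if all colours occur
equally often among the automorphisms with any given restriction to a subspace of dimension less
than `s`. If the last part of `ρ` carries no basis, whether `g` maps one flag to another depends
only on the restriction of `g` to the last proper member of the first flag, so for a colouring of
large enough strength the automorphisms of colour `0` are transitive on flags, with density
`1 / |Γ|`.

A bijection of `GL(m,q)` with `Γ` has strength `1`, and strengths add up: for `W ≤ V`, add the
colours of the automorphisms that an element of the stabiliser of `W` induces on `V ⧸ W` and on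
`W`, and extend to `GL(V)` along coset representatives. If `dim U < s₁ + s₂`, then the image of `U`
in `V ⧸ W` has dimension less than `s₁` or `U ∩ W` has dimension less than `s₂`, and one of the two
colours already equidistributes the sum. Hence `GL(n,q)` has a colouring of strength `s` by a group
of order `|GL(m,q)|` as soon as `n ≥ s * m`, while `|GL(m,q)|` tends to infinity with `m`. -/

section Cosets

variable {G L Γ : Type*} [Group G] [Group L] [AddCommGroup Γ]

/-- The colouring `h` of a group `G` takes every value equally often on each left coset of `K`.
So that it also makes sense for infinite groups, this is encoded by asking that each translation
of the colours be induced by an injective self-map of `G` preserving the left cosets of `K`. -/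
def EquidistributedOnCosets (K : Subgroup G) (h : G → Γ) : Prop :=
  ∀ γ, ∃ φ : G → G, Function.Injective φ ∧ ∀ g, g⁻¹ * φ g ∈ K ∧ h (φ g) = γ + h g

theorem equidistributedOnCosets_equiv (e : G ≃ Γ) : EquidistributedOnCosets ⊤ e := fun γ =>
  ⟨fun g => e.symm (γ + e g), e.symm.injective.comp ((add_right_injective γ).comp e.injective),
    fun _ => ⟨Subgroup.mem_top _, e.apply_symm_apply _⟩⟩

namespace EquidistributedOnCosets

theorem add_snd {K : Subgroup G} {h : G → Γ} (H : EquidistributedOnCosets K h) (h' : L → Γ) :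
    EquidistributedOnCosets (K.prod ⊥) fun x : G × L => h x.1 + h' x.2 := fun γ => by
  obtain ⟨φ, hinj, hφ⟩ := H γ
  refine ⟨Prod.map φ id, hinj.prodMap Function.injective_id, fun x => ⟨⟨(hφ x.1).1, ?_⟩, ?_⟩⟩
  · simp
  · simp only [Prod.map_fst, Prod.map_snd, id_eq, (hφ x.1).2, add_assoc]

theorem add_fst {K : Subgroup L} {h' : L → Γ} (H : EquidistributedOnCosets K h') (h : G → Γ) :
    EquidistributedOnCosets (Subgroup.prod ⊥ K) fun x : G × L => h x.1 + h' x.2 := fun γ => by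
  obtain ⟨φ, hinj, hφ⟩ := H γ
  refine ⟨Prod.map id φ, Function.injective_id.prodMap hinj, fun x => ⟨⟨?_, (hφ x.2).1⟩, ?_⟩⟩
  · simp
  · simp only [Prod.map_fst, Prod.map_snd, id_eq, (hφ x.2).2, add_left_comm]

theorem comp_monoidHom {K : Subgroup G} {M : Subgroup L} {h : L → Γ}
    (H : EquidistributedOnCosets M h) (f : G →* L) (hM : M ≤ K.map f) :
    EquidistributedOnCosets K (h ∘ f) := fun γ => by
  obtain ⟨φ, hinj, hφ⟩ := H γ
  choose k hkK hk using fun l => hM (hφ l).1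
  have hlift : ∀ g, f (g * k (f g)) = φ (f g) := fun g => by
    rw [map_mul, hk, mul_inv_cancel_left]
  refine ⟨fun g => g * k (f g), fun g g' hgg' => ?_, fun g => ⟨?_, ?_⟩⟩
  · have hf : f g = f g' := hinj (by rw [← hlift, ← hlift]; exact congrArg f hgg')
    simpa only [hf, mul_left_inj] using hgg'
  · rw [inv_mul_cancel_left]
    exact hkK (f g)
  · rw [Function.comp_apply, hlift, (hφ _).2, Function.comp_apply]

theorem comp_equiv_snd {P K : Subgroup G} {h : P → Γ}
    (H : EquidistributedOnCosets (K.subgroupOf P) h) {T : Set G}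
    (hT : Subgroup.IsComplement T P) :
    EquidistributedOnCosets K fun g => h (hT.equiv g).2 := fun γ => by
  obtain ⟨φ, hinj, hφ⟩ := H γ
  let k : P → P := fun p => p⁻¹ * φ p
  have hequiv : ∀ g, hT.equiv (g * k (hT.equiv g).2) = ((hT.equiv g).1, φ (hT.equiv g).2) :=
    fun g => by rw [hT.equiv_mul_right, mul_inv_cancel_left]
  refine ⟨fun g => g * k (hT.equiv g).2, fun g g' hgg' => ?_, fun g => ⟨?_, ?_⟩⟩
  · have := (hequiv g).symm.trans ((congrArg hT.equiv hgg').trans (hequiv g'))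
    rw [Prod.mk.injEq] at this
    exact hT.equiv.injective (Prod.ext this.1 (hinj this.2))
  · rw [inv_mul_cancel_left]
    exact (hφ _).1
  · exact (congrArg (fun x => h x.2) (hequiv g)).trans (hφ _).2

theorem card_eq_card_mul_card_zero [Finite G] [Finite Γ] {K : Subgroup G} {h : G → Γ}
    (H : EquidistributedOnCosets K h) {S : Set G} (hS : ∀ g ∈ S, ∀ k ∈ K, g * k ∈ S) :
    Nat.card S = Nat.card Γ * Nat.card ↥(h ⁻¹' {0} ∩ S) := by
  have hle : ∀ γ δ, Nat.card ↥(h ⁻¹' {δ} ∩ S) ≤ Nat.card ↥(h ⁻¹' {γ + δ} ∩ S) := fun γ δ => by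
    obtain ⟨φ, hinj, hφ⟩ := H γ
    refine Nat.card_mono (Set.toFinite _) ?_ |>.trans' (Nat.card_image_of_injective hinj _).ge
    rintro _ ⟨g, ⟨rfl, hg⟩, rfl⟩
    exact ⟨(hφ g).2, by simpa using hS g hg _ (hφ g).1⟩
  have heq : ∀ γ, Nat.card ↥(h ⁻¹' {γ} ∩ S) = Nat.card ↥(h ⁻¹' {0} ∩ S) := fun γ =>
    le_antisymm (by simpa using hle (-γ) γ) (by simpa using hle γ 0)
  have := Fintype.ofFinite Γ
  let e : S ≃ Σ γ, ↥(h ⁻¹' {γ} ∩ S) :=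
    { toFun := fun g => ⟨h g, g, rfl, g.2⟩
      invFun := fun g => ⟨g.2, g.2.2.2⟩
      left_inv := fun _ => rfl
      right_inv := by rintro ⟨_, g, rfl, hg⟩; rfl }
  rw [Nat.card_congr e, Nat.card_sigma, Finset.sum_congr rfl fun γ _ => heq γ, Finset.sum_const,
    Finset.card_univ, ← Nat.card_eq_fintype_card, smul_eq_mul]

theorem nonempty_preimage_zero {K : Subgroup G} {h : G → Γ} (H : EquidistributedOnCosets K h) :
    (h ⁻¹' {0}).Nonempty := by
  obtain ⟨φ, -, hφ⟩ := H (-h 1)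
  exact ⟨φ 1, (hφ 1).2.trans (neg_add_cancel _)⟩

theorem card_preimage_zero_lt [Finite G] [Finite Γ] {K : Subgroup G} {h : G → Γ}
    (H : EquidistributedOnCosets K h) {ε : ℝ} (hε : 0 < ε) (hΓ : 1 / ε < Nat.card Γ) :
    (Nat.card (h ⁻¹' {0}) : ℝ) < ε * Nat.card G := by
  have hcard := H.card_eq_card_mul_card_zero (S := Set.univ) fun _ _ _ _ => trivial
  rw [Nat.card_univ, Set.inter_univ] at hcard
  have hpos : 0 < Nat.card (h ⁻¹' {0}) := Nat.card_pos_iff.2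
    ⟨H.nonempty_preimage_zero.to_subtype, inferInstance⟩
  rw [div_lt_iff₀' hε] at hΓ
  rw [hcard, Nat.cast_mul, ← mul_assoc]
  exact lt_mul_of_one_lt_left (Nat.cast_pos.2 hpos) hΓ

end EquidistributedOnCosets

end Cosets

section Colourings

open scoped Pointwise

variable {F V Γ : Type*} [Field F] [AddCommGroup V] [Module F V]

theorem exists_isCompl_le_inf_sup_inf (U W : Submodule F V) :
    ∃ C, IsCompl W C ∧ U ≤ U ⊓ W ⊔ U ⊓ C := by
  obtain ⟨D, hD, hDU⟩ := IsModularLattice.exists_disjoint_and_sup_eq (inf_le_left : U ⊓ W ≤ U)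
  have hDU' : D ≤ U := le_sup_right.trans hDU.le
  have hWD : Disjoint D W := by
    rw [disjoint_iff_inf_le] at hD ⊢
    exact hD.trans' (le_inf (le_inf (inf_le_left.trans hDU') inf_le_right) inf_le_left)
  obtain ⟨C, hDC, hC⟩ := hWD.exists_isCompl
  exact ⟨C, hC.symm, hDU.ge.trans (sup_le_sup_left (le_inf hDU' hDC) _)⟩

theorem finrank_map_mkQ_add_finrank_comap_subtype [FiniteDimensional F V] (U W : Submodule F V) :
    finrank F (U.map W.mkQ) + finrank F (U.comap W.subtype) = finrank F U := by
  rw [← (W.mkQ.domRestrict U).finrank_range_add_finrank_ker, LinearMap.range_domRestrict,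
    LinearMap.ker_domRestrict, W.ker_mkQ, ← Submodule.finrank_map_subtype_eq W,
    ← Submodule.finrank_map_subtype_eq U, Submodule.map_comap_subtype,
    Submodule.map_comap_subtype, inf_comm]

/-- The automorphism of `W` induced by an automorphism of `V` stabilising `W`; the companion of
`LinearEquiv.reduce`, which is the automorphism induced on `V ⧸ W`. -/
def restrictStabilizer (W : Submodule F V) :
    MulAction.stabilizer (V ≃ₗ[F] V) W →* (W ≃ₗ[F] W) where
  toFun g := g.1.ofSubmodules W W g.2
  map_one' := rfl
  map_mul' _ _ := rfl

theorem exists_blockDiagonal_mem_stabilizer {W C : Submodule F V} (hC : IsCompl W C)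
    (a : W ≃ₗ[F] W) (d : (V ⧸ W) ≃ₗ[F] (V ⧸ W)) :
    ∃ g : MulAction.stabilizer (V ≃ₗ[F] V) W, restrictStabilizer W g = a ∧
      LinearEquiv.reduce W g = d ∧ ∀ c ∈ C, g.1 c ∈ C := by
  let e := W.prodEquivOfIsCompl C hC
  let π := W.quotientEquivOfIsCompl C hC
  let g := e.symm ≪≫ₗ a.prodCongr (π.symm ≪≫ₗ d ≪≫ₗ π) ≪≫ₗ e
  have hgW : ∀ w : W, g w = a w := fun w => by simp [g, e]
  have hgC : ∀ c : C, g c = π (d (π.symm c)) := fun c => by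
    simp [g, e]
  have hstab : W.map g.toLinearMap = W := le_antisymm
    (Submodule.map_le_iff_le_comap.2 fun w hw =>
      Submodule.mem_comap.2 ((hgW ⟨w, hw⟩).symm ▸ SetLike.coe_mem _))
    fun w hw => ⟨a.symm ⟨w, hw⟩, SetLike.coe_mem _, by simp [hgW]⟩
  refine ⟨⟨g, hstab⟩, LinearEquiv.ext fun w => Subtype.ext (hgW w), LinearEquiv.ext fun x => ?_,
    fun c hc => hgC ⟨c, hc⟩ ▸ SetLike.coe_mem _⟩
  obtain ⟨c, rfl⟩ := π.symm.surjective x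
  exact (congrArg W.mkQ (hgC c)).trans (π.symm_apply_apply _)

theorem exists_reduce_eq_restrictStabilizer_eq {U W : Submodule F V} {d : (V ⧸ W) ≃ₗ[F] (V ⧸ W)}
    (hd : d ∈ fixingSubgroup _ (U.map W.mkQ : Set (V ⧸ W))) {a : W ≃ₗ[F] W}
    (ha : a ∈ fixingSubgroup _ (U.comap W.subtype : Set W)) :
    ∃ g : MulAction.stabilizer (V ≃ₗ[F] V) W, (g : V ≃ₗ[F] V) ∈ fixingSubgroup _ (U : Set V) ∧
      LinearEquiv.reduce W g = d ∧ restrictStabilizer W g = a := by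
  obtain ⟨C, hC, hUC⟩ := exists_isCompl_le_inf_sup_inf U W
  obtain ⟨g, rfl, rfl, hgC⟩ := exists_blockDiagonal_mem_stabilizer hC a d
  have hgU : U ≤ g.1.fixedSubmodule := by
    refine hUC.trans (sup_le ?_ ?_)
    · rintro u ⟨huU, huW⟩
      exact congrArg Subtype.val (ha ⟨⟨u, huW⟩, huU⟩)
    · rintro u ⟨huU, huC⟩
      have hmk : W.mkQ (g.1 u) = W.mkQ u := hd ⟨W.mkQ u, Submodule.mem_map_of_mem huU⟩
      exact sub_eq_zero.1 (Submodule.disjoint_def.1 hC.disjoint _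
        ((Submodule.Quotient.eq W).1 hmk) (C.sub_mem (hgC u huC) huC))
  exact ⟨g, fun u => hgU u.2, rfl, rfl⟩

/-- The colouring `h` of `GL(V)` is equidistributed on every set of automorphisms with a
prescribed restriction to a subspace of dimension less than `s`. -/
def HasStrength [AddCommGroup Γ] (s : ℕ) (h : (V ≃ₗ[F] V) → Γ) : Prop :=
  ∀ U : Submodule F V, finrank F U < s →
    EquidistributedOnCosets (fixingSubgroup (V ≃ₗ[F] V) (U : Set V)) h

namespace HasStrength

variable [FiniteDimensional F V] [AddCommGroup Γ]

theorem one_of_equiv (e : (V ≃ₗ[F] V) ≃ Γ) : HasStrength 1 e := fun U hU => by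
  have hbot : U = ⊥ := Submodule.finrank_eq_zero.1 (Nat.lt_one_iff.1 hU)
  have htop : fixingSubgroup (V ≃ₗ[F] V) (U : Set V) = ⊤ := by
    subst hbot
    exact eq_top_iff.2 fun g _ => by simp [mem_fixingSubgroup_iff]
  exact htop ▸ equidistributedOnCosets_equiv e

theorem exists_add {W : Submodule F V} {s₁ s₂ : ℕ} {h₁ : ((V ⧸ W) ≃ₗ[F] (V ⧸ W)) → Γ}
    (H₁ : HasStrength s₁ h₁) {h₂ : (W ≃ₗ[F] W) → Γ} (H₂ : HasStrength s₂ h₂) :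
    ∃ h : (V ≃ₗ[F] V) → Γ, HasStrength (s₁ + s₂) h := by
  let P := MulAction.stabilizer (V ≃ₗ[F] V) W
  let f : P →* ((V ⧸ W) ≃ₗ[F] (V ⧸ W)) × (W ≃ₗ[F] W) :=
    (LinearEquiv.reduce W).prod (restrictStabilizer W)
  obtain ⟨T, hT, -⟩ := P.exists_isComplement_left 1
  let h : P → Γ := (fun x => h₁ x.1 + h₂ x.2) ∘ f
  refine ⟨fun g => h (hT.equiv g).2, fun U hU => ?_⟩
  refine EquidistributedOnCosets.comp_equiv_snd ?_ hT
  have hlift : (fixingSubgroup _ (U.map W.mkQ : Set (V ⧸ W))).prod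
      (fixingSubgroup _ (U.comap W.subtype : Set W)) ≤
      ((fixingSubgroup (V ≃ₗ[F] V) (U : Set V)).subgroupOf P).map f := by
    rintro ⟨d, a⟩ ⟨hd, ha⟩
    obtain ⟨g, hgU, rfl, rfl⟩ := exists_reduce_eq_restrictStabilizer_eq hd ha
    exact ⟨g, hgU, rfl⟩
  have hdim := finrank_map_mkQ_add_finrank_comap_subtype U W
  obtain hU₁ | hU₂ : finrank F (U.map W.mkQ) < s₁ ∨ finrank F (U.comap W.subtype) < s₂ := by
    omega
  · exact ((H₁ _ hU₁).add_snd h₂).comp_monoidHom f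
      (hlift.trans' (Subgroup.prod_mono_right _ bot_le))
  · exact ((H₂ _ hU₂).add_fst h₁).comp_monoidHom f
      (hlift.trans' (Subgroup.prod_mono_left _ bot_le))

end HasStrength

theorem exists_submodule_finrank_eq {m : ℕ} (hm : m ≤ finrank F V) :
    ∃ W : Submodule F V, finrank F W = m := by
  obtain ⟨v, hv⟩ := exists_linearIndependent_of_le_finrank hm
  exact ⟨_, (finrank_span_eq_card hv).trans (Fintype.card_fin m)⟩

theorem exists_hasStrength [FiniteDimensional F V] [AddCommGroup Γ] {m : ℕ}
    (e : GL (Fin m) F ≃ Γ) {s : ℕ} (hs : s * m ≤ finrank F V) :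
    ∃ h : (V ≃ₗ[F] V) → Γ, HasStrength s h := by
  induction s generalizing V with
  | zero => exact ⟨0, fun _ h => absurd h (Nat.not_lt_zero _)⟩
  | succ s ih =>
    rw [add_one_mul] at hs
    obtain ⟨W, hW⟩ := exists_submodule_finrank_eq (Nat.le_of_add_left_le hs)
    have hquot := W.finrank_quotient_add_finrank
    obtain ⟨h, H⟩ := ih (V := V ⧸ W) (by omega)
    exact H.exists_add (HasStrength.one_of_equiv
      ((LinearMap.GeneralLinearGroup.generalLinearEquiv F W).symm.toEquiv.trans
        ((Matrix.GeneralLinearGroup.toLin' (finBasisOfFinrankEq F W hW)).symm.toEquiv.trans e)))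

theorem le_card_GL (F : Type*) [Field F] [Finite F] (m : ℕ) : m ≤ Nat.card (GL (Fin m) F) := by
  have := Fintype.ofFinite F
  rcases m with _ | m
  · exact Nat.zero_le _
  have hdvd : Fintype.card F ^ (m + 1) - 1 ∣ Nat.card (GL (Fin (m + 1)) F) := by
    rw [Matrix.card_GL_field]
    exact Finset.dvd_prod_of_mem (fun i : Fin (m + 1) => Fintype.card F ^ (m + 1) -
      Fintype.card F ^ (i : ℕ)) (Finset.mem_univ 0)
  have hpow : m + 1 < Fintype.card F ^ (m + 1) := Nat.lt_pow_self Fintype.one_lt_card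
  exact (Nat.le_sub_one_of_lt hpow).trans (Nat.le_of_dvd Nat.card_pos hdvd)

end Colourings

section Layers

variable {F V : Type*} [Field F] [AddCommGroup V] [Module F V]

theorem exists_linearIndependent_mkQ [FiniteDimensional F V] {a b : Submodule F V} (hab : a ≤ b)
    {r : ℕ} (hr : finrank F b = finrank F a + r) :
    ∃ v : Fin r → V, (∀ m, v m ∈ b) ∧ LinearIndependent F fun m => a.mkQ (v m) := by
  have hrank : finrank F (b.map a.mkQ) = r := by
    have := finrank_map_mkQ_add_finrank_comap_subtype b a
    rw [Submodule.comap_subtype_eq_top.2 hab, finrank_top] at this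
    omega
  obtain ⟨β⟩ : Nonempty (Basis (Fin r) F (b.map a.mkQ)) := ⟨finBasisOfFinrankEq F _ hrank⟩
  choose v hvb hv using fun m => Submodule.mem_map.1 (β m).2
  refine ⟨v, hvb, ?_⟩
  rw [funext hv]
  exact β.linearIndependent.map' _ (Submodule.ker_subtype _)

theorem sup_span_range_eq_of_linearIndependent_mkQ [FiniteDimensional F V] {a b : Submodule F V}
    (hab : a ≤ b) {ι : Type*} [Fintype ι] (hr : finrank F b = finrank F a + Fintype.card ι)
    {v : ι → V} (hvb : ∀ m, v m ∈ b) (hv : LinearIndependent F fun m => a.mkQ (v m)) :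
    a ⊔ Submodule.span F (Set.range v) = b := by
  refine Submodule.eq_of_le_of_finrank_eq
    (sup_le hab (Submodule.span_le.2 (Set.range_subset_iff.2 hvb))) ?_
  have hdisj : Disjoint (Submodule.span F (Set.range v)) a := by
    simpa only [Submodule.ker_mkQ] using Submodule.range_ker_disjoint hv
  have hsum := Submodule.finrank_sup_add_finrank_inf_eq a (Submodule.span F (Set.range v))
  rwa [hdisj.symm.eq_bot, finrank_bot, add_zero, finrank_span_eq_card (.of_comp a.mkQ hv), ← hr]
    at hsum

theorem eq_span_image_of_forall_succ {k : ℕ} {ι : Fin k → Type*} {v : ∀ i, ι i → V}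
    {U : Fin (k + 1) → Submodule F V} (hzero : U 0 = ⊥)
    (hsucc : ∀ i : Fin k, U i.castSucc ⊔ Submodule.span F (Set.range (v i)) = U i.succ)
    (j : Fin (k + 1)) :
    U j = Submodule.span F ((fun x : Σ i, ι i => v x.1 x.2) '' {x | x.1.castSucc < j}) := by
  induction j using Fin.induction with
  | zero => simp [hzero]
  | succ i ih =>
    have hlayer : {x : Σ i, ι i | x.1.castSucc < i.succ} =
        {x | x.1.castSucc < i.castSucc} ∪ Set.range (Sigma.mk i) := by
      ext x
      simp only [Fin.castSucc_lt_succ_iff, Fin.castSucc_lt_castSucc_iff, Set.range_sigmaMk,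
        Set.mem_union, Set.mem_preimage, Set.mem_singleton_iff, Set.mem_ofPred_eq, le_iff_lt_or_eq]
    rw [← hsucc, ih, hlayer, Set.image_union, Submodule.span_union, ← Set.range_comp]
    rfl

end Layers

section Flags

variable {F : Type} [Field F] {q n : ℕ} {α : SigmaNQ q n}

theorem AlphaFlag.exists_adapted_basis (A : AlphaFlag F α) :
    ∃ b : Basis (Σ i, Fin (α.ρ.blocksFun i)) F (Fin n → F),
      (∀ j, A.V j = Submodule.span F (b '' {x | x.1.castSucc < j})) ∧
      ∀ i hi m, b ⟨i, m⟩ = A.B i hi m := by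
  have hle : ∀ i : Fin α.ρ.length, A.V i.castSucc ≤ A.V i.succ := fun i =>
    A.mono i.castSucc_lt_succ.le
  have hlayer : ∀ i, ∃ v : Fin (α.ρ.blocksFun i) → (Fin n → F), (∀ m, v m ∈ A.V i.succ) ∧
      LinearIndependent F (fun m => (A.V i.castSucc).mkQ (v m)) ∧ ∀ hi, v = A.B i hi := fun i => by
    by_cases hi : i ∈ α.I
    · exact ⟨A.B i hi, A.B_mem i hi, A.B_indep i hi, fun _ => rfl⟩
    · obtain ⟨v, hv, hind⟩ := exists_linearIndependent_mkQ (hle i) (A.dim i)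
      exact ⟨v, hv, hind, fun h => absurd h hi⟩
  choose v hv hind hvB using hlayer
  have hspan := eq_span_image_of_forall_succ A.bot_eq fun i =>
    sup_span_range_eq_of_linearIndependent_mkQ (hle i)
      ((A.dim i).trans (by rw [Fintype.card_fin])) (hv i) (hind i)
  have htop : ⊤ ≤ Submodule.span F
      (Set.range fun x : Σ i, Fin (α.ρ.blocksFun i) => v x.1 x.2) := by
    rw [← A.top_eq, hspan]
    exact Submodule.span_mono (Set.image_subset_range _ _)
  have hcard : Fintype.card (Σ i, Fin (α.ρ.blocksFun i)) = finrank F (Fin n → F) := by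
    rw [finrank_fin_fun, Fintype.card_sigma]
    simp only [Fintype.card_fin, Composition.sum_blocksFun]
  refine ⟨basisOfTopLeSpanOfCardEqFinrank _ htop hcard, fun j => ?_, fun i hi m => ?_⟩
  · rw [coe_basisOfTopLeSpanOfCardEqFinrank, hspan]
  · rw [coe_basisOfTopLeSpanOfCardEqFinrank, hvB i hi]

/-- The isomorphism `g ↦ glMap F g`, bundled so that colourings of the group of linear
automorphisms can be transported to `GL (Fin n) F`. -/
def glEquiv (F : Type) [Field F] (n : ℕ) : GL (Fin n) F ≃* ((Fin n → F) ≃ₗ[F] (Fin n → F)) :=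
  Matrix.GeneralLinearGroup.toLin.trans
    (LinearMap.GeneralLinearGroup.generalLinearEquiv F (Fin n → F))

theorem glEquiv_toLinearMap (g : GL (Fin n) F) : (glEquiv F n g).toLinearMap = glMap F g := by
  ext
  rfl

theorem glMap_mul (g g' : GL (Fin n) F) : glMap F (g * g') = glMap F g ∘ₗ glMap F g' :=
  Matrix.mulVecLin_mul _ _

theorem glMap_inv_comp (g : GL (Fin n) F) : glMap F g⁻¹ ∘ₗ glMap F g = LinearMap.id := by
  rw [← glMap_mul, inv_mul_cancel]
  exact Matrix.mulVecLin_one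

theorem glMap_surjective (g : GL (Fin n) F) : Function.Surjective (glMap F g) :=
  glEquiv_toLinearMap g ▸ (glEquiv F n g).surjective

theorem exists_mapsAlphaFlag (A C : AlphaFlag F α) : ∃ g, MapsAlphaFlag F g A C := by
  obtain ⟨b, hbV, hbB⟩ := A.exists_adapted_basis
  obtain ⟨c, hcV, hcB⟩ := C.exists_adapted_basis
  obtain ⟨g, hg⟩ := (glEquiv F n).surjective (b.equiv c (Equiv.refl _))
  have hgb : ∀ x, glMap F g (b x) = c x := fun x => by
    rw [← glEquiv_toLinearMap, hg]
    exact b.equiv_apply x c _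
  refine ⟨g, fun j => ?_, fun i hi m => ?_⟩
  · rw [hbV, hcV, Submodule.map_span, Set.image_image]
    simp only [hgb]
  · rw [← hbB, hgb, hcB i hi, sub_self]
    exact zero_mem _

namespace MapsAlphaFlag

variable {g g' : GL (Fin n) F} {A B C : AlphaFlag F α}

theorem mul (hg : MapsAlphaFlag F g B C) (hg' : MapsAlphaFlag F g' A B) :
    MapsAlphaFlag F (g * g') A C := by
  refine ⟨fun j => ?_, fun i hi m => ?_⟩
  · rw [glMap_mul, Submodule.map_comp, hg'.1, hg.1]
  · have hmem : glMap F g (glMap F g' (A.B i hi m) - B.B i hi m) ∈ C.V i.castSucc :=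
      hg.1 i.castSucc ▸ Submodule.mem_map_of_mem (hg'.2 i hi m)
    simpa only [glMap_mul, LinearMap.comp_apply, map_sub, sub_add_sub_cancel] using
      add_mem hmem (hg.2 i hi m)

theorem inv (hg : MapsAlphaFlag F g A C) : MapsAlphaFlag F g⁻¹ C A := by
  have hV : ∀ j, (C.V j).map (glMap F g⁻¹) = A.V j := fun j => by
    rw [← hg.1, ← Submodule.map_comp, glMap_inv_comp, Submodule.map_id]
  refine ⟨hV, fun i hi m => ?_⟩
  have hmem := Submodule.mem_map_of_mem (f := glMap F g⁻¹) (hg.2 i hi m)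
  rw [hV, map_sub, ← LinearMap.comp_apply, glMap_inv_comp, LinearMap.id_apply] at hmem
  exact sub_mem_comm_iff.1 hmem

theorem self_of_fixes {l : Fin α.ρ.length} (hl : l.succ = Fin.last _) (hlI : l ∉ α.I)
    (hg : ∀ x ∈ A.V l.castSucc, glMap F g x = x) : MapsAlphaFlag F g A A := by
  have hlast : ∀ j, j = Fin.last _ ∨ j ≤ l.castSucc := fun j =>
    (Fin.le_last j).eq_or_lt.imp_right fun h => Fin.le_castSucc_iff.2 (hl ▸ h)
  refine ⟨fun j => ?_, fun i hi m => ?_⟩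
  · rcases hlast j with rfl | hj
    · rw [A.top_eq, Submodule.map_top, LinearMap.range_eq_top.2 (glMap_surjective g)]
    · have himage := Set.image_congr fun x hx => hg x (A.mono hj hx)
      exact SetLike.coe_injective (himage.trans (Set.image_id' _))
  · have hi' : i.succ ≤ l.castSucc := (hlast i.succ).resolve_left fun h =>
      hlI (Fin.succ_injective _ (h.trans hl.symm) ▸ hi)
    rw [hg _ (A.mono hi' (A.B_mem i hi m)), sub_self]
    exact zero_mem _

end MapsAlphaFlag

theorem card_mapsAlphaFlag_eq (A C A' C' : AlphaFlag F α) :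
    Nat.card {g | MapsAlphaFlag F g A C} = Nat.card {g | MapsAlphaFlag F g A' C'} := by
  obtain ⟨x, hx⟩ := exists_mapsAlphaFlag A A'
  obtain ⟨y, hy⟩ := exists_mapsAlphaFlag C C'
  refine Nat.card_congr (((Equiv.mulLeft y).trans (Equiv.mulRight x⁻¹)).subtypeEquiv fun g =>
    ⟨fun hg => (hy.mul hg).mul hx.inv, fun hg => ?_⟩)
  simpa [mul_assoc] using (hy.inv.mul hg).mul hx

namespace HasStrength

variable {Γ : Type*} [AddCommGroup Γ] {s : ℕ} {h : ((Fin n → F) ≃ₗ[F] (Fin n → F)) → Γ}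

theorem comp_glEquiv (H : HasStrength s h) {U : Submodule F (Fin n → F)} (hU : finrank F U < s) :
    EquidistributedOnCosets ((fixingSubgroup _ (U : Set (Fin n → F))).comap
      (glEquiv F n).toMonoidHom) (h ∘ glEquiv F n) :=
  (H U hU).comp_monoidHom (glEquiv F n).toMonoidHom
    (Subgroup.map_comap_eq_self_of_surjective (glEquiv F n).surjective _).ge

theorem transitiveOnAlphaFlags [Fintype F] [Finite Γ] (H : HasStrength s h)
    {l : Fin α.ρ.length} (hl : l.succ = Fin.last _) (hlI : l ∉ α.I)
    (hs : n < s + α.ρ.blocksFun l) :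
    TransitiveOnAlphaFlags F ((h ∘ glEquiv F n) ⁻¹' {0}) α := by
  have hcard : ∀ A C : AlphaFlag F α, Nat.card {g | MapsAlphaFlag F g A C} =
      Nat.card Γ * Nat.card {g // g ∈ (h ∘ glEquiv F n) ⁻¹' {0} ∧ MapsAlphaFlag F g A C} := by
    intro A C
    have hdim : finrank F (A.V l.castSucc) < s := by
      have hdim_last := A.dim l
      rw [hl, A.top_eq, finrank_top, finrank_fin_fun] at hdim_last
      omega
    refine (H.comp_glEquiv hdim).card_eq_card_mul_card_zero fun g hg k hk => ?_
    exact MapsAlphaFlag.mul hg (.self_of_fixes hl hlI fun x hx => hk ⟨x, hx⟩)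
  rcases isEmpty_or_nonempty (AlphaFlag F α) with hE | ⟨⟨A₀⟩⟩
  · exact ⟨0, fun A => hE.elim A⟩
  · exact ⟨_, fun A C => Nat.eq_of_mul_eq_mul_left Nat.card_pos
      ((hcard A C).symm.trans ((card_mapsAlphaFlag_eq A C A₀ A₀).trans (hcard A₀ A₀)))⟩

end HasStrength

end Flags

section Types

theorem map_get_filter_val_lt_length_append {β : Type*} (L₁ L₂ : List β) :
    ((Finset.univ.filter fun i : Fin (L₁ ++ L₂).length => i.1 < L₁.length).val.map
      (L₁ ++ L₂).get) = (L₁ : Multiset β) := by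
  have hlen : L₁.length ≤ (L₁ ++ L₂).length := (L₁.prefix_append L₂).length_le
  have hmap : (Finset.univ.filter fun i : Fin (L₁ ++ L₂).length => i.1 < L₁.length) =
      Finset.univ.map (Fin.castLEEmb hlen) := by
    ext i
    simp only [Finset.mem_filter_univ, Finset.mem_map, Finset.mem_univ, true_and]
    exact ⟨fun hi => ⟨⟨i, hi⟩, rfl⟩, by rintro ⟨j, rfl⟩; exact j.2⟩
  have hget : (L₁ ++ L₂).get ∘ Fin.castLEEmb hlen = L₁.get := by
    ext i
    simp
  rw [hmap, Finset.map_val, Multiset.map_map, hget, Fin.univ_val_map, List.ofFn_get]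

theorem map_get_compl_filter_val_lt_length_append {β : Type*} (L₁ L₂ : List β) :
    ((Finset.univ.filter fun i : Fin (L₁ ++ L₂).length => i.1 < L₁.length)ᶜ.val.map
      (L₁ ++ L₂).get) = (L₂ : Multiset β) := by
  refine add_left_cancel (a := (L₁ : Multiset β)) ?_
  nth_rw 1 [← map_get_filter_val_lt_length_append L₁ L₂]
  rw [← Multiset.map_add, ← Finset.disjUnion_val _ _ disjoint_compl_right,
    Finset.disjUnion_eq_union, Finset.union_compl, Fin.univ_val_map, List.ofFn_get,
    Multiset.coe_add]

theorem exists_sigmaNQ_last {q n m : ℕ} {σ τ : Multiset ℕ} (hθ : InTheta q n σ (m ::ₘ τ)) :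
    ∃ (α : SigmaNQ q n) (l : Fin α.ρ.length), α.typeSigma = σ ∧ α.typeTau = m ::ₘ τ ∧
      l.succ = Fin.last _ ∧ l ∉ α.I ∧ α.ρ.blocksFun l = m := by
  obtain ⟨hσ, hτ, hsum, htwo⟩ := hθ
  let L := τ.toList ++ [m]
  have hL : (L : Multiset ℕ) = m ::ₘ τ := by
    rw [← Multiset.coe_add, τ.coe_toList, Multiset.coe_singleton, add_comm,
      Multiset.singleton_add]
  have hblocks : ((σ.toList ++ L : List ℕ) : Multiset ℕ) = σ + m ::ₘ τ := by
    rw [← Multiset.coe_add, σ.coe_toList, hL]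
  let ρ : Composition n :=
    { blocks := σ.toList ++ L
      blocks_pos := fun {p} hp => by
        rw [← Multiset.mem_coe, hblocks, Multiset.mem_add] at hp
        exact hp.elim (hσ p) (hτ p)
      blocks_sum := by rw [← Multiset.sum_coe, hblocks, Multiset.sum_add, hsum] }
  let I : Finset (Fin ρ.length) :=
    Finset.univ.filter fun i : Fin (σ.toList ++ L).length => i.1 < σ.toList.length
  have hI : I.val.map ρ.blocksFun = σ :=
    (map_get_filter_val_lt_length_append _ L).trans σ.coe_toList
  have hIc : Iᶜ.val.map ρ.blocksFun = m ::ₘ τ :=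
    (map_get_compl_filter_val_lt_length_append _ L).trans hL
  have hlen : ρ.length = σ.toList.length + τ.toList.length + 1 := by
    simp [Composition.length, ρ, L, add_assoc]
  refine ⟨⟨ρ, I, fun hq i hi => htwo hq _ ?_⟩, ⟨σ.toList.length + τ.toList.length, ?_⟩, hI, hIc,
    ?_, ?_, ?_⟩
  · rw [← hIc]
    exact Multiset.mem_map_of_mem _ (Finset.mem_compl.2 hi)
  · exact hlen ▸ Nat.lt_succ_self _
  · exact Fin.ext hlen.symm
  · simp [I]
  · simp [Composition.blocksFun, ρ, L]

theorem inTheta_sub_cons {q n : ℕ} {σ τ : Multiset ℕ} (hσ : ∀ p ∈ σ, 0 < p)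
    (hτ : ∀ p ∈ τ, 0 < p) (htwo : q = 2 → ∀ p ∈ τ, 1 < p) (hn : σ.sum + τ.sum + 2 ≤ n) :
    InTheta q n σ ((n - σ.sum - τ.sum) ::ₘ τ) :=
  ⟨hσ, Multiset.forall_mem_cons.2 ⟨by omega, hτ⟩, by rw [Multiset.sum_cons]; omega,
    fun hq => Multiset.forall_mem_cons.2 ⟨by omega, htwo hq⟩⟩

end Types

/-- For a fixed partition `σ`, a fixed partition `τ̃` (with all parts `> 1` if `q = 2`) and
`ε > 0`, for all sufficiently large `n` there is a nonempty `(σ,τ)`-transitive subset `Y` of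
`GL(n,q)` with `|Y|/|GL(n,q)| < ε`, where `τ = (n − |σ| − |τ̃|, τ̃_1, τ̃_2, …)`. -/
theorem statement7 (q : ℕ) (hq : IsPrimePow q) (F : Type) [Field F] [Fintype F]
    (hF : Fintype.card F = q)
    (σ : Multiset ℕ) (hσ : ∀ p ∈ σ, 0 < p)
    (τt : Multiset ℕ) (hτt : ∀ p ∈ τt, 0 < p) (hτt2 : q = 2 → ∀ p ∈ τt, 1 < p)
    (ε : ℝ) (hε : 0 < ε) :
    ∃ N : ℕ, ∀ n, N ≤ n → ∃ Y : Set (GL (Fin n) F), Y.Nonempty ∧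
      STTransitive F q n Y σ ((n - σ.sum - τt.sum) ::ₘ τt) ∧
      (Nat.card Y : ℝ) < ε * (Nat.card (GL (Fin n) F) : ℝ) := by
  obtain ⟨m, hm⟩ := exists_nat_gt (1 / ε)
  let t := σ.sum + τt.sum
  refine ⟨(t + 1) * m + t + 2, fun n hn => ?_⟩
  have hθ : InTheta q n σ ((n - σ.sum - τt.sum) ::ₘ τt) :=
    inTheta_sub_cons hσ hτt hτt2 (by omega)
  obtain ⟨α, l, hασ, hατ, hl, hlI, hlm⟩ := exists_sigmaNQ_last hθ
  let Γ := ZMod (Nat.card (GL (Fin m) F))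
  obtain ⟨e⟩ : Nonempty (GL (Fin m) F ≃ Γ) := Finite.card_eq.1 (Nat.card_zmod _).symm
  obtain ⟨h, H⟩ := exists_hasStrength e (s := t + 1) (V := Fin n → F)
    (by rw [finrank_fin_fun]; omega)
  have hbot := H.comp_glEquiv (U := ⊥) (by simp)
  have hΓ : 1 / ε < Nat.card Γ := hm.trans_le <| by
    rw [Nat.card_zmod]
    exact_mod_cast le_card_GL F m
  exact ⟨_, hbot.nonempty_preimage_zero,
    ⟨α, hασ, hατ, H.transitiveOnAlphaFlags hl hlI (by omega)⟩, hbot.card_preimage_zero_lt hε hΓ⟩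
end

section
/- Let q be a prime power and let n and i be integers with 0 ≤ i ≤ n. Then the number of elements g ∈ GL(n,q) with dim ker(g − id) = i (equivalently, with rank(g − id) = n − i) equals (|GL(n,q)|/|GL(i,q)|) · Σ_{k=0}^{n−i} (−1)^k q^{C(k,2)} / (q^{k·i} · |GL(k,q)|), where |GL(m,q)| = ∏_{j=0}^{m−1}(q^m − q^j) (so |GL(0,q)| = 1) and C(k,2) = k(k−1)/2. -/
/-- `|GL(m,q)| = ∏_{j=0}^{m−1} (q^m − q^j)` (so `cardGL q 0 = 1`). -/
def cardGL (q m : ℕ) : ℕ := ∏ j ∈ Finset.range m, (q ^ m - q ^ j)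

/-
The expected value of the `q`-descending factorial `(x - 1)(x - q)⋯(x - q ^ (k - 1))` at
`x = q ^ dim ker (g - id)`, for uniform `g ∈ GL(n, q)` and `k ≤ n`, is `1`: the factorial counts
the linearly independent `k`-tuples fixed by `g`, and `GL(n, q)` acts transitively on such tuples,
so this is Burnside's lemma. These moments determine the distribution of `dim ker (g - id)`,
by means of the alternating `q`-binomial identity, whose partial sums telescope.
-/

open Finset Module

section QDescFactorial

/-- The `q`-analogue `(x - 1)(x - q)⋯(x - q ^ (k - 1))` of the descending factorial. When `q` is
the size of a finite field and `x` the size of a vector space over it, this is the number of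
linearly independent `k`-tuples of vectors. -/
def qDescFactorial {R : Type*} [CommRing R] (q x : R) (k : ℕ) : R :=
  ∏ j ∈ range k, (x - q ^ j)

section CommRing

variable {R : Type*} [CommRing R] (q : R)

@[simp]
lemma qDescFactorial_zero (x : R) : qDescFactorial q x 0 = 1 :=
  prod_range_zero _

lemma qDescFactorial_succ (x : R) (k : ℕ) :
    qDescFactorial q x (k + 1) = qDescFactorial q x k * (x - q ^ k) :=
  prod_range_succ _ k

lemma qDescFactorial_pow_mul_add (y : R) (i k : ℕ) :
    qDescFactorial q (q ^ i * y) (i + k) =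
      qDescFactorial q (q ^ i * y) i * (q ^ (k * i) * qDescFactorial q y k) := by
  have hshift : ∏ j ∈ range k, (q ^ i * y - q ^ (i + j)) = q ^ (k * i) * qDescFactorial q y k := by
    simp only [pow_add, ← mul_sub, prod_mul_distrib, prod_const, card_range, ← pow_mul,
      mul_comm k i, qDescFactorial]
  rw [← hshift]
  exact prod_range_add _ i k

lemma qDescFactorial_mul_succ (y : R) (k : ℕ) :
    qDescFactorial q (q * y) (k + 1) = (q * y - 1) * (q ^ k * qDescFactorial q y k) := by
  simpa [qDescFactorial_succ, add_comm 1 k] using qDescFactorial_pow_mul_add q y 1 k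

lemma qDescFactorial_pow_eq_zero {r k : ℕ} (h : r < k) : qDescFactorial q (q ^ r) k = 0 :=
  prod_eq_zero (mem_range.2 h) (sub_self _)

lemma qDescFactorial_pow_self_ne_zero [IsDomain R] {q : R}
    (hq : Function.Injective (q ^ · : ℕ → R)) (k : ℕ) : qDescFactorial q (q ^ k) k ≠ 0 :=
  prod_ne_zero_iff.2 fun _ hj => sub_ne_zero.2 (hq.ne (mem_range.1 hj).ne')

end CommRing

section Field

variable {K : Type*} [Field K] {q : K}

lemma ne_zero_of_pow_injective (hq : Function.Injective (q ^ · : ℕ → K)) : q ≠ 0 := by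
  rintro rfl
  exact absurd (hq (show (0 : K) ^ 1 = 0 ^ 2 by simp)) (by decide)

lemma sum_neg_one_pow_mul_qDescFactorial_mul (hq : Function.Injective (q ^ · : ℕ → K)) (y : K)
    (N : ℕ) :
    ∑ k ∈ range (N + 1),
        (-1) ^ k * q ^ k.choose 2 / qDescFactorial q (q ^ k) k * qDescFactorial q (q * y) k =
      (-1) ^ N * q ^ (N + 1).choose 2 / qDescFactorial q (q ^ N) N * qDescFactorial q y N := by
  induction N with
  | zero => simp
  | succ N ih =>
    have hq0 : q ≠ 0 := ne_zero_of_pow_injective hq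
    have hN : qDescFactorial q (q ^ N) N ≠ 0 := qDescFactorial_pow_self_ne_zero hq N
    have hqN : q ^ (N + 1) - 1 ≠ 0 := sub_ne_zero.2 (by simpa using hq.ne N.succ_ne_zero)
    have hchoose : (N + 1 + 1).choose 2 = (N + 1).choose 2 + (N + 1) := by
      rw [Nat.choose_succ_succ' (N + 1) 1, Nat.choose_one_right, add_comm]
    have hself : qDescFactorial q (q ^ (N + 1)) (N + 1) =
        (q ^ (N + 1) - 1) * (q ^ N * qDescFactorial q (q ^ N) N) := by
      rw [pow_succ' q N, qDescFactorial_mul_succ]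
    rw [sum_range_succ, ih, hchoose, hself, qDescFactorial_mul_succ, qDescFactorial_succ q y]
    field_simp
    ring

lemma sum_neg_one_pow_mul_qDescFactorial_pow (hq : Function.Injective (q ^ · : ℕ → K)) {m N : ℕ}
    (hm : m ≤ N) :
    ∑ k ∈ range (N + 1),
        (-1) ^ k * q ^ k.choose 2 / qDescFactorial q (q ^ k) k * qDescFactorial q (q ^ m) k =
      if m = 0 then 1 else 0 := by
  cases m with
  | zero =>
    rw [sum_range_succ', sum_eq_zero fun k _ => by
      rw [qDescFactorial_pow_eq_zero q k.succ_pos, mul_zero]]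
    simp
  | succ m =>
    rw [pow_succ', sum_neg_one_pow_mul_qDescFactorial_mul hq, qDescFactorial_pow_eq_zero q hm,
      mul_zero, if_neg m.succ_ne_zero]

lemma sum_neg_one_pow_mul_qDescFactorial_pow_add (hq : Function.Injective (q ^ · : ℕ → K))
    {r i N : ℕ} (hr : r ≤ i + N) :
    ∑ k ∈ range (N + 1), (-1) ^ k * q ^ k.choose 2 / (q ^ (k * i) * qDescFactorial q (q ^ k) k) *
        qDescFactorial q (q ^ r) (i + k) =
      if r = i then qDescFactorial q (q ^ i) i else 0 := by
  obtain hri | hir := lt_or_ge r i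
  · rw [if_neg hri.ne]
    exact sum_eq_zero fun k _ => by
      rw [qDescFactorial_pow_eq_zero q (Nat.lt_add_right k hri), mul_zero]
  obtain ⟨m, rfl⟩ := Nat.exists_eq_add_of_le hir
  have hterm (k : ℕ) :
      (-1) ^ k * q ^ k.choose 2 / (q ^ (k * i) * qDescFactorial q (q ^ k) k) *
          qDescFactorial q (q ^ (i + m)) (i + k) =
        qDescFactorial q (q ^ (i + m)) i *
          ((-1) ^ k * q ^ k.choose 2 / qDescFactorial q (q ^ k) k *
            qDescFactorial q (q ^ m) k) := by
    have hqki : q ^ (k * i) ≠ 0 := pow_ne_zero _ (ne_zero_of_pow_injective hq)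
    rw [pow_add, qDescFactorial_pow_mul_add]
    field_simp
  simp_rw [hterm]
  rw [← mul_sum, sum_neg_one_pow_mul_qDescFactorial_pow hq (by omega)]
  by_cases hm : m = 0 <;> simp [hm]

lemma card_filter_eq_sum_qDescFactorial {ι : Type*} (hq : Function.Injective (q ^ · : ℕ → K))
    {s : Finset ι} {d : ι → ℕ} {i N : ℕ} (hd : ∀ a ∈ s, d a ≤ i + N) :
    (#{a ∈ s | d a = i} : K) =
      (∑ k ∈ range (N + 1),
        (-1) ^ k * q ^ k.choose 2 / (q ^ (k * i) * qDescFactorial q (q ^ k) k) *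
          ∑ a ∈ s, qDescFactorial q (q ^ d a) (i + k)) / qDescFactorial q (q ^ i) i := by
  rw [eq_div_iff (qDescFactorial_pow_self_ne_zero hq i)]
  simp_rw [mul_sum]
  rw [sum_comm, sum_congr rfl fun a ha => sum_neg_one_pow_mul_qDescFactorial_pow_add hq (hd a ha),
    ← sum_filter, sum_const, nsmul_eq_mul]

end Field

lemma natCast_cardGL {R : Type*} [CommRing R] {q : ℕ} (hq : 0 < q) (m : ℕ) :
    (cardGL q m : R) = qDescFactorial (q : R) ((q : R) ^ m) m := by
  rw [cardGL, Nat.cast_prod, qDescFactorial]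
  refine prod_congr rfl fun j hj => ?_
  rw [Nat.cast_sub (Nat.pow_le_pow_right hq (mem_range.1 hj).le), Nat.cast_pow, Nat.cast_pow]

end QDescFactorial

lemma sum_card_fixedBy_of_isPretransitive (G X : Type*) [Group G] [Fintype G] [MulAction G X]
    [Finite X] [Nonempty X] [MulAction.IsPretransitive G X] :
    ∑ g : G, Nat.card (MulAction.fixedBy X g) = Nat.card G := by
  classical
  have := Fintype.ofFinite X
  have := Fintype.ofFinite (MulAction.orbitRel.Quotient G X)
  have hsub : Subsingleton (MulAction.orbitRel.Quotient G X) :=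
    (MulAction.pretransitive_iff_subsingleton_quotient G X).1 inferInstance
  have horbits : Fintype.card (MulAction.orbitRel.Quotient G X) = 1 :=
    Fintype.card_eq_one_iff_nonempty_unique.2 ⟨uniqueOfSubsingleton ⟦Classical.arbitrary X⟧⟩
  simp only [Nat.card_eq_fintype_card]
  rw [MulAction.sum_card_fixedBy_eq_card_orbits_mul_card_group, horbits, one_mul]

section LinearIndependentTuples

variable {F V : Type*} [DivisionRing F] [AddCommGroup V] [Module F V]

lemma exists_linearEquiv_apply_eq_of_linearIndependent {ι : Type*} [Finite ι] {s t : ι → V}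
    (hs : LinearIndependent F s) (ht : LinearIndependent F t) :
    ∃ g : V ≃ₗ[F] V, ∀ a, g (s a) = t a := by
  have : FiniteDimensional F (Submodule.span F (Set.range s)) :=
    .span_of_finite F (Set.finite_range s)
  obtain ⟨g, hg⟩ := Submodule.exists_linearEquiv_restrict_eq
    (hs.linearCombinationEquiv.symm ≪≫ₗ ht.linearCombinationEquiv)
  refine ⟨g, fun a => ?_⟩
  have hsa : (hs.linearCombinationEquiv (Finsupp.single a 1) : V) = s a := by simp
  rw [← hsa, ← hg]
  simp

variable (F V) in
/-- The set of linearly independent `k`-tuples of vectors of `V`, as a set with an action of the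
group of linear automorphisms of `V`. -/
def linearIndependentTuples (k : ℕ) : SubMulAction (V ≃ₗ[F] V) (Fin k → V) where
  carrier := {s | LinearIndependent F s}
  smul_mem' g _ hs := hs.map' (g : V →ₗ[F] V) g.ker

instance isPretransitive_linearIndependentTuples (k : ℕ) :
    MulAction.IsPretransitive (V ≃ₗ[F] V) (linearIndependentTuples F V k) where
  exists_smul_eq s t :=
    have ⟨g, hg⟩ := exists_linearEquiv_apply_eq_of_linearIndependent s.2 t.2
    ⟨g, Subtype.ext (funext hg)⟩

lemma nonempty_linearIndependentTuples [FiniteDimensional F V] {k : ℕ} (hk : k ≤ finrank F V) :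
    Nonempty (linearIndependentTuples F V k) :=
  ⟨finBasis F V ∘ Fin.castLE hk, (finBasis F V).linearIndependent.comp _ (Fin.castLE_injective hk)⟩

/-- A tuple of vectors is fixed by `g` exactly when its entries lie in the fixed subspace of `g`. -/
def fixedByLinearIndependentTuplesEquiv (k : ℕ) (g : V ≃ₗ[F] V) :
    MulAction.fixedBy (linearIndependentTuples F V k) g ≃
      linearIndependentTuples F (g : V →ₗ[F] V).fixedSubmodule k where
  toFun s := ⟨fun a => ⟨s.1.1 a, congrFun (congrArg Subtype.val s.2) a⟩,
    LinearIndependent.of_comp (Submodule.subtype _) s.1.2⟩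
  invFun s := ⟨⟨fun a => s.1 a, s.2.map' (Submodule.subtype _) (Submodule.ker_subtype _)⟩,
    Subtype.ext (funext fun a => (s.1 a).2)⟩
  left_inv _ := rfl
  right_inv _ := rfl

variable [Fintype F] [FiniteDimensional F V]

lemma natCast_card_linearIndependentTuples (R : Type*) [CommRing R] (k : ℕ) :
    (Nat.card (linearIndependentTuples F V k) : R) =
      qDescFactorial (Fintype.card F : R) ((Fintype.card F : R) ^ finrank F V) k := by
  have : Finite V := Module.finite_of_finite F
  obtain hk | hk := le_or_gt k (finrank F V)
  · have hcard : Nat.card (linearIndependentTuples F V k) = _ := card_linearIndependent hk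
    rw [hcard, Nat.cast_prod, qDescFactorial, ← Fin.prod_univ_eq_prod_range]
    refine prod_congr rfl fun j _ => ?_
    rw [Nat.cast_sub (Nat.pow_le_pow_right Fintype.card_pos (j.2.le.trans hk)), Nat.cast_pow,
      Nat.cast_pow]
  · have : IsEmpty (linearIndependentTuples F V k) :=
      ⟨fun s => hk.not_ge (by simpa using s.2.fintype_card_le_finrank)⟩
    rw [qDescFactorial_pow_eq_zero _ hk, Nat.card_of_isEmpty, Nat.cast_zero]

lemma sum_qDescFactorial_pow_finrank_fixedSubmodule (R : Type*) [CommRing R]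
    [Fintype (V ≃ₗ[F] V)] {k : ℕ} (hk : k ≤ finrank F V) :
    ∑ g : V ≃ₗ[F] V, qDescFactorial (Fintype.card F : R)
        ((Fintype.card F : R) ^ finrank F (g : V →ₗ[F] V).fixedSubmodule) k =
      Nat.card (V ≃ₗ[F] V) := by
  have : Finite V := Module.finite_of_finite F
  have : Finite (linearIndependentTuples F V k) := Subtype.finite
  have : Nonempty (linearIndependentTuples F V k) := nonempty_linearIndependentTuples hk
  rw [← sum_card_fixedBy_of_isPretransitive _ (linearIndependentTuples F V k), Nat.cast_sum]
  refine sum_congr rfl fun g _ => ?_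
  rw [Nat.card_congr (fixedByLinearIndependentTuplesEquiv k g),
    natCast_card_linearIndependentTuples]

end LinearIndependentTuples

section GeneralLinearGroup

variable {F V : Type*} [Field F] [AddCommGroup V] [Module F V]

lemma card_linearEquiv_self [Fintype F] [FiniteDimensional F V] :
    Nat.card (V ≃ₗ[F] V) = cardGL (Fintype.card F) (finrank F V) := by
  let e : GL (Fin (finrank F V)) F ≃* (V ≃ₗ[F] V) :=
    (Matrix.GeneralLinearGroup.toLin' (finBasis F V)).trans
      (LinearMap.GeneralLinearGroup.generalLinearEquiv F V)
  rw [← Nat.card_congr e.toEquiv, Matrix.card_GL_field, cardGL, ← Fin.prod_univ_eq_prod_range]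

lemma card_GL_finrank_ker_sub_one_eq {n : Type*} [Fintype n] [DecidableEq n] (i : ℕ) :
    Nat.card {g : GL n F //
        finrank F (LinearMap.ker (Matrix.mulVecLin ((g : Matrix n n F) - 1))) = i} =
      Nat.card {g : (n → F) ≃ₗ[F] (n → F) //
        finrank F (g : (n → F) →ₗ[F] (n → F)).fixedSubmodule = i} := by
  let e : GL n F ≃* ((n → F) ≃ₗ[F] (n → F)) :=
    Matrix.GeneralLinearGroup.toLin.trans (LinearMap.GeneralLinearGroup.generalLinearEquiv F _)
  refine Nat.card_congr (e.toEquiv.subtypeEquiv fun g => ?_)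
  have hker : LinearMap.ker (Matrix.mulVecLin ((g : Matrix n n F) - 1)) =
      (e g : (n → F) →ₗ[F] (n → F)).fixedSubmodule := by
    ext v
    simp [e, sub_eq_zero]
  rw [hker]
  rfl

theorem statement10_general (K : Type*) [Field K] [CharZero K] [Fintype F]
    [FiniteDimensional F V] {i : ℕ} (hi : i ≤ finrank F V) :
    (Nat.card {g : V ≃ₗ[F] V // finrank F (g : V →ₗ[F] V).fixedSubmodule = i} : K) =
      (cardGL (Fintype.card F) (finrank F V) : K) / (cardGL (Fintype.card F) i : K) *
        ∑ k ∈ range (finrank F V - i + 1), (-1 : K) ^ k * (Fintype.card F : K) ^ k.choose 2 /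
          ((Fintype.card F : K) ^ (k * i) * (cardGL (Fintype.card F) k : K)) := by
  have : Finite V := Module.finite_of_finite F
  have : Finite (V ≃ₗ[F] V) := DFunLike.finite _
  have := Fintype.ofFinite (V ≃ₗ[F] V)
  have hq : Function.Injective ((Fintype.card F : K) ^ · : ℕ → K) := fun a b hab =>
    Nat.pow_right_injective Fintype.one_lt_card (Nat.cast_injective (R := K) (by simpa using hab))
  have hd (g : V ≃ₗ[F] V) :
      finrank F (g : V →ₗ[F] V).fixedSubmodule ≤ i + (finrank F V - i) :=
    (Submodule.finrank_le _).trans_eq (Nat.add_sub_of_le hi).symm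
  have hmoment (k : ℕ) (hk : k ∈ range (finrank F V - i + 1)) :
      ∑ g : V ≃ₗ[F] V, qDescFactorial (Fintype.card F : K)
          ((Fintype.card F : K) ^ finrank F (g : V →ₗ[F] V).fixedSubmodule) (i + k) =
        cardGL (Fintype.card F) (finrank F V) := by
    rw [sum_qDescFactorial_pow_finrank_fixedSubmodule K (by grind), card_linearEquiv_self]
  rw [Nat.card_eq_fintype_card, Fintype.card_subtype,
    card_filter_eq_sum_qDescFactorial hq fun g _ => hd g,
    sum_congr rfl fun k hk => by rw [hmoment k hk], ← sum_mul, mul_comm, ← div_mul_eq_mul_div]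
  simp only [natCast_cardGL Fintype.card_pos]

end GeneralLinearGroup

/-- The number of `g ∈ GL(n,q)` with `dim ker(g − id) = i` equals
`(|GL(n,q)|/|GL(i,q)|) · Σ_{k=0}^{n−i} (−1)^k q^{C(k,2)} / (q^{k·i} |GL(k,q)|)`. -/
theorem statement10 (q : ℕ) (hq : IsPrimePow q) (F : Type) [Field F] [Fintype F]
    (hF : Fintype.card F = q) (n i : ℕ) (hi : i ≤ n) :
    (Nat.card {g : GL (Fin n) F //
        Module.finrank F
          (LinearMap.ker (Matrix.mulVecLin ((g : Matrix (Fin n) (Fin n) F) - 1))) = i} : ℝ)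
      = ((cardGL q n : ℝ) / (cardGL q i : ℝ)) *
          ∑ k ∈ Finset.range (n - i + 1),
            (-1 : ℝ) ^ k * (q : ℝ) ^ Nat.choose k 2 / ((q : ℝ) ^ (k * i) * (cardGL q k : ℝ)) := by
  subst hF
  rw [card_GL_finrank_ker_sub_one_eq]
  simpa only [finrank_fin_fun] using
    statement10_general (F := F) (V := Fin n → F) ℝ (i := i) (by rwa [finrank_fin_fun])
end
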